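/- If a decomposition rule (DFeat, DForall, DSet, DSetF, or DConj) transforms a constraint system C_s into C'_s, then C_s is consistent if and only if C'_s is consistent. -/

import Mathlib

/-! Every decomposition rule names some subterms by fresh variables, or splits a conjunction.
A model of the transformed system is, with the same assignment, a model of the original one: the
new constraints on the new variables can be substituted back. Conversely, satisfaction of the
original constraint provides elements witnessing the subterms; sending the fresh variables to these
witnesses satisfies the new constraints, and it changes nothing else, since the denotation of a
term depends only on the values of the variables occurring in it (`denot_reassign`). Several fresh
variables can be reassigned at once because they are pairwise distinct (`exists_fresh`). -/

namespace FeatSetLogic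

/-! ### Syntax

All symbol alphabets (variables, relation/feature symbols, constants,
primitive concepts and atoms) are taken to be `ℕ`.  The primitive concept
`0` plays the role of `⊥` and `1` the role of `⊤`. -/

/-- The `P`-category of the BNF: variables, atoms, constants, primitive
concepts and their negations. -/
inductive PAtom : Type where
  | var (x : ℕ)
  | atom (a : ℕ)
  | const (c : ℕ)
  | prim (A : ℕ)
  | negVar (x : ℕ)
  | negAtom (a : ℕ)
  | negConst (c : ℕ)
  | negPrim (A : ℕ)
deriving DecidableEq

/-- Feature terms with set descriptions and set operations. -/
inductive FTerm : Type where
  | patom (p : PAtom)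
  | feat (f : ℕ) (T : FTerm)                         -- f : T
  | exi (f : ℕ) (T : FTerm)                          -- ∃ f : T
  | fa (f : ℕ) (p : PAtom)                           -- ∀ f : P
  | setDesc (f : ℕ) (n : ℕ) (ts : Fin n → FTerm)     -- f : {T₁,…,Tₙ}
  | setDescEq (f : ℕ) (n : ℕ) (ts : Fin n → FTerm)   -- f : {T₁,…,Tₙ}₌
  | union (f : ℕ) (g : ℕ) (x : ℕ) (h : ℕ) (y : ℕ)    -- f : g(x) ∪ h(y)
  | inter (f : ℕ) (g : ℕ) (x : ℕ) (h : ℕ) (y : ℕ)    -- f : g(x) ∩ h(y)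
  | supset (f : ℕ) (g : ℕ) (x : ℕ)                   -- f : ⊇ g(x)
  | disjRel (f : ℕ) (x : ℕ) (g : ℕ) (y : ℕ)          -- f(x) ≠ g(y)
  | conj (S T : FTerm)                               -- S ⊓ T

/-- The feature term `x` (a variable used as a term). -/
abbrev vt (x : ℕ) : FTerm := .patom (.var x)

/-! ### Semantics -/

/-- An interpretation `I = (U^I, ·^I)`: relation symbols denote binary
relations, atoms denote pairwise distinct elements without successors. -/
structure Interp : Type 1 where
  U : Type
  rel : ℕ → U → U → Prop
  atomI : ℕ → U
  atom_inj : Function.Injective atomI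
  atomic : ∀ a f e, ¬ rel f (atomI a) e

/-- `f^I(e) = { e' | (e,e') ∈ f^I }`. -/
def Interp.img (I : Interp) (f : ℕ) (e : I.U) : Set I.U := {e' | I.rel f e e'}

/-- An `I`-assignment: variables denote elements, distinct constants denote
distinct elements, primitive concepts denote subsets with `α ⊥ = ∅` and
`α ⊤ = U^I`. -/
structure Assign (I : Interp) : Type where
  vval : ℕ → I.U
  cval : ℕ → I.U
  cval_inj : Function.Injective cval
  pval : ℕ → Set I.U
  pval_bot : pval 0 = ∅
  pval_top : pval 1 = Set.univ

/-- Denotation of `P`-category terms. -/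
def pdenot (I : Interp) (α : Assign I) : PAtom → Set I.U
  | .var x => {α.vval x}
  | .atom a => {I.atomI a}
  | .const c => {α.cval c}
  | .prim A => α.pval A
  | .negVar x => {α.vval x}ᶜ
  | .negAtom a => {I.atomI a}ᶜ
  | .negConst c => {α.cval c}ᶜ
  | .negPrim A => (α.pval A)ᶜ

/-- The denotation function `[[·]]^{I,α}`. -/
def denot (I : Interp) (α : Assign I) : FTerm → Set I.U
  | .patom p => pdenot I α p
  | .feat f T => {e | ∃ e', I.img f e = {e'} ∧ e' ∈ denot I α T}
  | .exi f T => {e | ∃ e', I.rel f e e' ∧ e' ∈ denot I α T}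
  | .fa f p => {e | ∀ e', I.rel f e e' → e' ∈ pdenot I α p}
  | .setDesc f n ts =>
      {e | ∃ es : Fin n → I.U, I.img f e = Set.range es ∧
            ∀ i, es i ∈ denot I α (ts i)}
  | .setDescEq f n ts =>
      {e | ∃ es : Fin n → I.U, (I.img f e).ncard = n ∧ I.img f e = Set.range es ∧
            ∀ i, es i ∈ denot I α (ts i)}
  | .union f g x h y => {e | I.img f e = I.img g (α.vval x) ∪ I.img h (α.vval y)}
  | .inter f g x h y => {e | I.img f e = I.img g (α.vval x) ∩ I.img h (α.vval y)}
  | .supset f g x => {e | I.img g (α.vval x) ⊆ I.img f e}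
  | .disjRel f x g y => {e | I.img f (α.vval x) ∩ I.img g (α.vval y) = ∅}
  | .conj S T => denot I α S ∩ denot I α T

/-- A term is consistent if its denotation is nonempty for some
interpretation and assignment. -/
def Consistent (T : FTerm) : Prop :=
  ∃ (I : Interp) (α : Assign I), (denot I α T).Nonempty

/-! ### Constraint systems -/

/-- Containment constraints `x = T` and disjunctive constraints
`x = x₁ ⊔ … ⊔ xₙ`. -/
inductive Constraint : Type where
  | contain (x : ℕ) (T : FTerm)
  | sqcup (x : ℕ) (n : ℕ) (xs : Fin n → ℕ)

/-- The variable-equality constraint `x = y`. -/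
abbrev eqC (x y : ℕ) : Constraint := .contain x (vt y)

/-- The constraint `x = ∃ f : y`. -/
abbrev exC (x f y : ℕ) : Constraint := .contain x (.exi f (vt y))

/-- Satisfaction of a single constraint. -/
def satC (I : Interp) (α : Assign I) : Constraint → Prop
  | .contain x T => α.vval x ∈ denot I α T
  | .sqcup x n xs => ∃ i : Fin n, α.vval x = α.vval (xs i)

/-- A constraint system: a (multiset-)conjunction of constraints. -/
abbrev CSys := Multiset Constraint

/-- `I, α` satisfies every constraint of `Cs`. -/
def satS (I : Interp) (α : Assign I) (Cs : CSys) : Prop := ∀ K ∈ Cs, satC I α K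

/-- Consistency of a constraint system. -/
def SysConsistent (Cs : CSys) : Prop := ∃ (I : Interp) (α : Assign I), satS I α Cs

/-! ### Variables and sizes -/

def PAtom.pvars : PAtom → Set ℕ
  | .var x => {x}
  | .negVar x => {x}
  | _ => ∅

/-- The variables occurring in a term. -/
def tvars : FTerm → Set ℕ
  | .patom p => p.pvars
  | .feat _ T => tvars T
  | .exi _ T => tvars T
  | .fa _ p => p.pvars
  | .setDesc _ _ ts => ⋃ i, tvars (ts i)
  | .setDescEq _ _ ts => ⋃ i, tvars (ts i)
  | .union _ _ x _ y => {x, y}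
  | .inter _ _ x _ y => {x, y}
  | .supset _ _ x => {x}
  | .disjRel _ x _ y => {x, y}
  | .conj S T => tvars S ∪ tvars T

def cvars : Constraint → Set ℕ
  | .contain x T => insert x (tvars T)
  | .sqcup x _ xs => insert x (Set.range xs)

/-- The variables occurring in a constraint system. -/
def svars (Cs : CSys) : Set ℕ := {v | ∃ K ∈ Cs, v ∈ cvars K}

/-- Size of a term. -/
def tsize : FTerm → ℕ
  | .patom _ => 1
  | .feat _ T => 1 + tsize T
  | .exi _ T => 1 + tsize T
  | .fa _ _ => 1
  | .setDesc _ n ts => 1 + n + ∑ i, tsize (ts i)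
  | .setDescEq _ n ts => 1 + n + ∑ i, tsize (ts i)
  | .union _ _ _ _ _ => 1
  | .inter _ _ _ _ _ => 1
  | .supset _ _ _ => 1
  | .disjRel _ _ _ _ => 1
  | .conj S T => 1 + tsize S + tsize T

/-! ### Syntactic entailment -/

/-- The paper's syntactic entailment relation `C_s ⊢ φ`. -/
inductive Entails (Cs : CSys) : Constraint → Prop where
  | mem {K : Constraint} : K ∈ Cs → Entails Cs K
  | refl (x : ℕ) : Entails Cs (eqC x x)
  | symm {x y : ℕ} : Entails Cs (eqC x y) → Entails Cs (eqC y x)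
  | trans {x y z : ℕ} :
      Entails Cs (eqC x y) → Entails Cs (eqC y z) → Entails Cs (eqC x z)
  | negSymm {x y : ℕ} :
      Entails Cs (.contain x (.patom (.negVar y))) →
      Entails Cs (.contain y (.patom (.negVar x)))
  | featEx {x f y : ℕ} :
      Entails Cs (.contain x (.feat f (vt y))) → Entails Cs (exC x f y)
  | featFa {x f y : ℕ} :
      Entails Cs (.contain x (.feat f (vt y))) →
      Entails Cs (.contain x (.fa f (.var y)))
  | setEx {x f : ℕ} {n : ℕ} {ts : Fin n → FTerm} {y : ℕ} (i : Fin n) :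
      Entails Cs (.contain x (.setDesc f n ts)) → ts i = vt y →
      Entails Cs (exC x f y)

/-- `succ(x,f) = { y | C_s ⊢ x = ∃f:y }`. -/
def succ (Cs : CSys) (x f : ℕ) : Set ℕ := {y | Entails Cs (exC x f y)}

/-! ### Decomposition and simplification rules -/

/-- `T` is a variable (as a term). -/
def FTerm.isVar : FTerm → Prop
  | .patom (.var _) => True
  | _ => False

/-- `T` is an atom or a constant (the range `c̄` of rules DForall, SConst). -/
def IsAtomConst (T : FTerm) : Prop :=
  (∃ a, T = .patom (.atom a)) ∨ (∃ c, T = .patom (.const c))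

/-- The range `C̄` of rules SForallE and SForall:
`C, ¬C, ¬a, ¬c, ¬z`. -/
def IsCbar : PAtom → Prop
  | .prim _ => True
  | .negPrim _ => True
  | .negAtom _ => True
  | .negConst _ => True
  | .negVar _ => True
  | _ => False

def rsub (x y z : ℕ) : ℕ := if z = x then y else z

def PAtom.subst (x y : ℕ) : PAtom → PAtom
  | .var z => .var (rsub x y z)
  | .negVar z => .negVar (rsub x y z)
  | p => p

/-- Substitution `[x/y]` (replace the variable `x` by `y`) on terms. -/
def FTerm.subst (x y : ℕ) : FTerm → FTerm
  | .patom p => .patom (p.subst x y)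
  | .feat f T => .feat f (T.subst x y)
  | .exi f T => .exi f (T.subst x y)
  | .fa f p => .fa f (p.subst x y)
  | .setDesc f n ts => .setDesc f n (fun i => (ts i).subst x y)
  | .setDescEq f n ts => .setDescEq f n (fun i => (ts i).subst x y)
  | .union f g a h b => .union f g (rsub x y a) h (rsub x y b)
  | .inter f g a h b => .inter f g (rsub x y a) h (rsub x y b)
  | .supset f g a => .supset f g (rsub x y a)
  | .disjRel f a g b => .disjRel f (rsub x y a) g (rsub x y b)
  | .conj S T => .conj (S.subst x y) (T.subst x y)

def Constraint.subst (x y : ℕ) : Constraint → Constraint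
  | .contain z T => .contain (rsub x y z) (T.subst x y)
  | .sqcup z n xs => .sqcup (rsub x y z) n (fun i => rsub x y (xs i))

/-- Substitution `[x/y]C_s` on constraint systems. -/
def substS (x y : ℕ) (Cs : CSys) : CSys := Cs.map (Constraint.subst x y)

/-- The multiset of constraints `F 0 ∧ … ∧ F (n-1)`. -/
def finCons {n : ℕ} (F : Fin n → Constraint) : CSys :=
  Multiset.map F (Finset.univ : Finset (Fin n)).val

/-- The decomposition rules of Figure 2. -/
inductive DecompStep : CSys → CSys → Prop where
  /-- (DFeat), for `F = f`. -/
  | dfeat {Cs Cs' rest : CSys} {x f y : ℕ} {T : FTerm} :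
      Cs = .contain x (.feat f T) ::ₘ rest →
      ¬ T.isVar → y ∉ svars Cs →
      Cs' = .contain x (.feat f (vt y)) ::ₘ .contain y T ::ₘ rest →
      DecompStep Cs Cs'
  /-- (DFeat), for `F = ∃f`. -/
  | dexi {Cs Cs' rest : CSys} {x f y : ℕ} {T : FTerm} :
      Cs = .contain x (.exi f T) ::ₘ rest →
      ¬ T.isVar → y ∉ svars Cs →
      Cs' = .contain x (.exi f (vt y)) ::ₘ .contain y T ::ₘ rest →
      DecompStep Cs Cs'
  /-- (DForall). -/
  | dforall {Cs Cs' rest : CSys} {x f y : ℕ} {p : PAtom} :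
      Cs = .contain x (.fa f p) ::ₘ rest →
      ((∃ a, p = .atom a) ∨ (∃ c, p = .const c)) → y ∉ svars Cs →
      Cs' = .contain x (.fa f (.var y)) ::ₘ .contain y (.patom p) ::ₘ rest →
      DecompStep Cs Cs'
  /-- (DSet). -/
  | dset {Cs Cs' rest : CSys} {x f n : ℕ} {ts : Fin n → FTerm} {xs : Fin n → ℕ} :
      Cs = .contain x (.setDesc f n ts) ::ₘ rest →
      (∃ i, ¬ (ts i).isVar) →
      Function.Injective xs → (∀ i, xs i ∉ svars Cs) →
      Cs' = .contain x (.setDesc f n (fun i => vt (xs i))) ::ₘ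
            (finCons (fun i => .contain (xs i) (ts i)) + rest) →
      DecompStep Cs Cs'
  /-- (DSetF). -/
  | dsetEq {Cs Cs' rest : CSys} {x f n : ℕ} {ts : Fin n → FTerm} {xs : Fin n → ℕ} :
      Cs = .contain x (.setDescEq f n ts) ::ₘ rest →
      (∃ i, ¬ (ts i).isVar) →
      Function.Injective xs → (∀ i, xs i ∉ svars Cs) →
      Cs' = .contain x (.setDesc f n (fun i => vt (xs i))) ::ₘ
            .contain x (.setDescEq f n (fun i => vt (xs i))) ::ₘ
            (finCons (fun i => .contain (xs i) (ts i)) + rest) →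
      DecompStep Cs Cs'
  /-- (DConj). -/
  | dconj {Cs Cs' rest : CSys} {x : ℕ} {S T : FTerm} :
      Cs = .contain x (.conj S T) ::ₘ rest →
      Cs' = .contain x S ::ₘ .contain x T ::ₘ rest →
      DecompStep Cs Cs'

/-- The deterministic constraint simplification rules
(Figures 3, 4 and 5, except SDis and ∪Down). -/
inductive SimpStepD : CSys → CSys → Prop where
  /-- (SEquals). -/
  | sequals {Cs Cs' rest : CSys} {x y : ℕ} :
      Cs = eqC x y ::ₘ rest → x ≠ y → x ∈ svars rest →
      Cs' = eqC x y ::ₘ substS x y rest →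
      SimpStepD Cs Cs'
  /-- (SConst). -/
  | sconst {Cs Cs' rest : CSys} {x y : ℕ} {T : FTerm} :
      Cs = .contain x T ::ₘ .contain y T ::ₘ rest → IsAtomConst T →
      Cs' = eqC x y ::ₘ .contain x T ::ₘ rest →
      SimpStepD Cs Cs'
  /-- (SFeat), where `F` ranges over `f, ∃f, ∀f`. -/
  | sfeat {Cs Cs' rest : CSys} {x f y z : ℕ} {T : FTerm} :
      Cs = .contain x (.feat f (vt y)) ::ₘ .contain x T ::ₘ rest →
      (T = .feat f (vt z) ∨ T = .exi f (vt z) ∨ T = .fa f (.var z)) →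
      Cs' = .contain x (.feat f (vt y)) ::ₘ eqC y z ::ₘ rest →
      SimpStepD Cs Cs'
  /-- (SExists). -/
  | sexists {Cs Cs' rest : CSys} {x f y z : ℕ} :
      Cs = .contain x (.exi f (vt y)) ::ₘ .contain x (.fa f (.var z)) ::ₘ rest →
      Cs' = .contain x (.feat f (vt y)) ::ₘ eqC y z ::ₘ rest →
      SimpStepD Cs Cs'
  /-- (SForallE). -/
  | sforallE {Cs Cs' rest : CSys} {x f y : ℕ} {p : PAtom} :
      Cs = .contain x (.fa f p) ::ₘ .contain x (.exi f (vt y)) ::ₘ rest →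
      IsCbar p → ¬ Entails rest (.contain y (.patom p)) →
      Cs' = .contain x (.fa f p) ::ₘ .contain x (.exi f (vt y)) ::ₘ
            .contain y (.patom p) ::ₘ rest →
      SimpStepD Cs Cs'
  /-- (SSetF), where `F` ranges over `f, ∀f`. -/
  | ssetF {Cs Cs' rest : CSys} {x f y n : ℕ} {xs : Fin n → ℕ} {T : FTerm} :
      Cs = .contain x T ::ₘ .contain x (.setDesc f n (fun i => vt (xs i))) ::ₘ rest →
      (T = .feat f (vt y) ∨ T = .fa f (.var y)) →
      Cs' = .contain x (.feat f (vt y)) ::ₘ (finCons (fun i => eqC y (xs i)) + rest) →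
      SimpStepD Cs Cs'
  /-- (SSet). -/
  | sset {Cs Cs' rest : CSys} {x f y : ℕ} {ts : Fin 1 → FTerm} :
      Cs = .contain x (.setDesc f 1 ts) ::ₘ rest → ts 0 = vt y →
      Cs' = .contain x (.feat f (vt y)) ::ₘ rest →
      SimpStepD Cs Cs'
  /-- (SDup). -/
  | sdup {Cs Cs' rest : CSys} {x f n : ℕ} {xs : Fin (n+1) → ℕ} {i j : Fin (n+1)} :
      Cs = .contain x (.setDesc f (n+1) (fun i => vt (xs i))) ::ₘ rest →
      i ≠ j → xs i = xs j →
      Cs' = .contain x (.setDesc f n (fun k => vt (xs (j.succAbove k)))) ::ₘ rest →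
      SimpStepD Cs Cs'
  /-- (SForall). -/
  | sforall {Cs Cs' rest : CSys} {x f n : ℕ} {xs : Fin n → ℕ} {p : PAtom} :
      Cs = .contain x (.fa f p) ::ₘ
           .contain x (.setDesc f n (fun i => vt (xs i))) ::ₘ rest →
      IsCbar p → (∃ i, ¬ Entails rest (.contain (xs i) (.patom p))) →
      Cs' = .contain x (.setDesc f n (fun i => vt (xs i))) ::ₘ
            (finCons (fun i => .contain (xs i) (.patom p)) + rest) →
      SimpStepD Cs Cs'
  /-- (SSetE). -/
  | ssetE {Cs Cs' rest : CSys} {x f y n : ℕ} {xs : Fin n → ℕ} :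
      Cs = .contain x (.exi f (vt y)) ::ₘ
           .contain x (.setDesc f n (fun i => vt (xs i))) ::ₘ rest →
      Cs' = .contain x (.setDesc f n (fun i => vt (xs i))) ::ₘ .sqcup y n xs ::ₘ rest →
      SimpStepD Cs Cs'
  /-- (SSetSet). -/
  | ssetSet {Cs Cs' rest : CSys} {x f n m : ℕ} {xs : Fin n → ℕ} {ys : Fin m → ℕ} :
      Cs = .contain x (.setDesc f n (fun i => vt (xs i))) ::ₘ
           .contain x (.setDesc f m (fun j => vt (ys j))) ::ₘ rest →
      n ≤ m →
      Cs' = .contain x (.setDesc f n (fun i => vt (xs i))) ::ₘ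
            (finCons (fun i => Constraint.sqcup (xs i) m ys) +
             (finCons (fun j => Constraint.sqcup (ys j) n xs) + rest)) →
      SimpStepD Cs Cs'
  /-- (⊆). -/
  | ssubset {Cs Cs' rest : CSys} {x f g y yi : ℕ} :
      Cs = .contain x (.supset f g y) ::ₘ rest →
      ¬ Entails rest (exC x f yi) → Entails rest (exC y g yi) →
      Cs' = .contain x (.supset f g y) ::ₘ exC x f yi ::ₘ rest →
      SimpStepD Cs Cs'
  /-- (∪Left). -/
  | unionLeft {Cs Cs' rest : CSys} {x f g y h z : ℕ} :
      Cs = .contain x (.union f g y h z) ::ₘ rest →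
      ¬ Entails rest (.contain x (.supset f g y)) →
      Cs' = .contain x (.union f g y h z) ::ₘ .contain x (.supset f g y) ::ₘ rest →
      SimpStepD Cs Cs'
  /-- (∪Right). -/
  | unionRight {Cs Cs' rest : CSys} {x f g y h z : ℕ} :
      Cs = .contain x (.union f g y h z) ::ₘ rest →
      ¬ Entails rest (.contain x (.supset f h z)) →
      Cs' = .contain x (.union f g y h z) ::ₘ .contain x (.supset f h z) ::ₘ rest →
      SimpStepD Cs Cs'
  /-- (∩Down). -/
  | interDown {Cs Cs' rest : CSys} {x f g y h z xi : ℕ} :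
      Cs = .contain x (.inter f g y h z) ::ₘ rest →
      Entails rest (exC x f xi) →
      (¬ Entails rest (exC y g xi) ∨ ¬ Entails rest (exC z h xi)) →
      Cs' = .contain x (.inter f g y h z) ::ₘ exC y g xi ::ₘ exC z h xi ::ₘ rest →
      SimpStepD Cs Cs'
  /-- (∩Up). -/
  | interUp {Cs Cs' rest : CSys} {x f g y h z xi : ℕ} :
      Cs = .contain x (.inter f g y h z) ::ₘ rest →
      ¬ Entails rest (exC x f xi) →
      Entails rest (exC y g xi) → Entails rest (exC z h xi) →
      Cs' = .contain x (.inter f g y h z) ::ₘ exC x f xi ::ₘ rest →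
      SimpStepD Cs Cs'

/-- The non-deterministic simplification rules SDis and ∪Down; each
constructor corresponds to one non-deterministic choice. -/
inductive SimpStepN : CSys → CSys → Prop where
  /-- (SDis), choosing the disjunct `i`. -/
  | sdis {Cs Cs' rest : CSys} {x n : ℕ} {xs : Fin n → ℕ} (i : Fin n) :
      Cs = .sqcup x n xs ::ₘ rest →
      (¬ ∃ j : Fin n, Entails rest (eqC x (xs j))) →
      Cs' = .sqcup x n xs ::ₘ eqC x (xs i) ::ₘ rest →
      SimpStepN Cs Cs'
  /-- (∪Down), left choice. -/
  | unionDownL {Cs Cs' rest : CSys} {x f g y h z xi : ℕ} :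
      Cs = .contain x (.union f g y h z) ::ₘ rest →
      Entails rest (exC x f xi) →
      ¬ Entails rest (exC y g xi) → ¬ Entails rest (exC z h xi) →
      Cs' = .contain x (.union f g y h z) ::ₘ exC y g xi ::ₘ rest →
      SimpStepN Cs Cs'
  /-- (∪Down), right choice. -/
  | unionDownR {Cs Cs' rest : CSys} {x f g y h z xi : ℕ} :
      Cs = .contain x (.union f g y h z) ::ₘ rest →
      Entails rest (exC x f xi) →
      ¬ Entails rest (exC y g xi) → ¬ Entails rest (exC z h xi) →
      Cs' = .contain x (.union f g y h z) ::ₘ exC z h xi ::ₘ rest →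
      SimpStepN Cs Cs'

/-- Any simplification rule application. -/
def SimpStep (Cs Cs' : CSys) : Prop := SimpStepD Cs Cs' ∨ SimpStepN Cs Cs'

/-- A constraint system is basic if no decomposition rule applies. -/
def Basic (Cs : CSys) : Prop := ∀ Cs', ¬ DecompStep Cs Cs'

/-- A constraint system is in normal form if no rule applies to it. -/
def NormalForm (Cs : CSys) : Prop :=
  (∀ Cs', ¬ DecompStep Cs Cs') ∧ (∀ Cs', ¬ SimpStepD Cs Cs') ∧
  (∀ Cs', ¬ SimpStepN Cs Cs')

/-- One step of the consistency checking procedure: decomposition rules are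
applied first; once the system is basic, simplification rules are applied. -/
def ProcStep (Cs Cs' : CSys) : Prop :=
  DecompStep Cs Cs' ∨ (Basic Cs ∧ SimpStep Cs Cs')

/-- The assignment `α` with the values of the variables replaced by `v`; constants and primitive
concepts keep their values. -/
def Assign.reassign {I : Interp} (α : Assign I) (v : ℕ → I.U) : Assign I :=
  { α with vval := v }

lemma pdenot_reassign {I : Interp} (α : Assign I) (v : ℕ → I.U) (p : PAtom)
    (h : ∀ z ∈ p.pvars, v z = α.vval z) :
    pdenot I (α.reassign v) p = pdenot I α p := by
  cases p <;> simp_all [pdenot, Assign.reassign, PAtom.pvars]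

/-- Coincidence lemma: the denotation of a term depends only on the values of its variables. -/
lemma denot_reassign {I : Interp} (α : Assign I) (v : ℕ → I.U) (T : FTerm)
    (h : ∀ z ∈ tvars T, v z = α.vval z) :
    denot I (α.reassign v) T = denot I α T := by
  induction T with
  | patom p => exact pdenot_reassign α v p h
  | feat f T ih => simp only [denot, ih h]
  | exi f T ih => simp only [denot, ih h]
  | fa f p => simp only [denot, pdenot_reassign α v p h]
  | setDesc f n ts ih =>
    have := fun i => ih i fun z hz => h z (Set.mem_iUnion.2 ⟨i, hz⟩)
    simp only [denot, this]
  | setDescEq f n ts ih =>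
    have := fun i => ih i fun z hz => h z (Set.mem_iUnion.2 ⟨i, hz⟩)
    simp only [denot, this]
  | union f g x k y => simp_all [denot, tvars, Assign.reassign]
  | inter f g x k y => simp_all [denot, tvars, Assign.reassign]
  | supset f g x => simp_all [denot, tvars, Assign.reassign]
  | disjRel f x g y => simp_all [denot, tvars, Assign.reassign]
  | conj S T ihS ihT =>
    simp only [denot, ihS fun z hz => h z (Or.inl hz), ihT fun z hz => h z (Or.inr hz)]

lemma satC_reassign {I : Interp} (α : Assign I) (v : ℕ → I.U) (K : Constraint)
    (h : ∀ z ∈ cvars K, v z = α.vval z) :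
    satC I (α.reassign v) K ↔ satC I α K := by
  cases K with
  | contain x T =>
    simp only [satC, denot_reassign α v T fun z hz => h z (Set.mem_insert_of_mem _ hz)]
    have : (α.reassign v).vval x = α.vval x := h x (Set.mem_insert _ _)
    rw [this]
  | sqcup x n xs =>
    have hx : (α.reassign v).vval x = α.vval x := h x (Set.mem_insert _ _)
    have hxs : ∀ i, (α.reassign v).vval (xs i) = α.vval (xs i) :=
      fun i => h _ (Set.mem_insert_of_mem _ ⟨i, rfl⟩)
    simp only [satC, hx, hxs]

/-- Pairwise distinct variables not occurring in the system `x = S ∧ rest` can be given prescribed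
values without affecting the value of `x`, the denotation of any term over the variables of `S`,
or the satisfaction of `rest`. -/
lemma exists_fresh {ι : Type} {I : Interp} (α : Assign I) {x : ℕ} {S : FTerm} {rest : CSys}
    (hrest : satS I α rest) (xs : ι → ℕ) (hinj : Function.Injective xs)
    (hfresh : ∀ i, xs i ∉ svars (.contain x S ::ₘ rest)) (es : ι → I.U) :
    ∃ β : Assign I, (∀ i, β.vval (xs i) = es i) ∧ β.vval x = α.vval x ∧ satS I β rest ∧
      ∀ T, tvars T ⊆ tvars S → denot I β T = denot I α T := by
  have hout : ∀ z ∈ svars (.contain x S ::ₘ rest),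
      Function.extend xs es α.vval z = α.vval z := by
    intro z hz
    refine Function.extend_apply' _ _ _ ?_
    rintro ⟨i, rfl⟩
    exact hfresh i hz
  refine ⟨α.reassign (Function.extend xs es α.vval), fun i => hinj.extend_apply _ _ i,
    hout x ⟨_, Multiset.mem_cons_self _ _, Set.mem_insert _ _⟩, fun K hK => ?_, fun T hT => ?_⟩
  · exact (satC_reassign _ _ _ fun z hz => hout z ⟨K, Multiset.mem_cons_of_mem hK, hz⟩).2
      (hrest K hK)
  · exact denot_reassign _ _ _ fun z hz =>
      hout z ⟨_, Multiset.mem_cons_self _ _, Set.mem_insert_of_mem _ (hT hz)⟩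

lemma satS_cons {I : Interp} {α : Assign I} {K : Constraint} {Cs : CSys} :
    satS I α (K ::ₘ Cs) ↔ satC I α K ∧ satS I α Cs := by
  simp [satS]

lemma satS_add {I : Interp} {α : Assign I} {Cs Ds : CSys} :
    satS I α (Cs + Ds) ↔ satS I α Cs ∧ satS I α Ds := by
  simp [satS, or_imp, forall_and]

lemma satS_finCons {I : Interp} {α : Assign I} {n : ℕ} {F : Fin n → Constraint} :
    satS I α (finCons F) ↔ ∀ i, satC I α (F i) := by
  simp [satS, finCons]

lemma mem_denot_vt {I : Interp} {α : Assign I} {y : ℕ} {e : I.U} :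
    e ∈ denot I α (vt y) ↔ e = α.vval y := Iff.rfl

/-- **Invariance of decomposition.** If a decomposition rule
transforms `C_s` into `C'_s`, then `C_s` is consistent iff `C'_s` is. -/
theorem decomp_preserves_consistency (Cs Cs' : CSys) (h : DecompStep Cs Cs') :
    SysConsistent Cs ↔ SysConsistent Cs' := by
  cases h with
  | @dfeat rest x f y T h1 _ hy h2 =>
    subst h1 h2
    simp only [SysConsistent, satS_cons]
    constructor
    · rintro ⟨I, α, ⟨e, he, heT⟩, hr⟩
      obtain ⟨β, hβ, hx, hr', hd⟩ := exists_fresh α hr (fun _ : Unit => y)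
        (fun _ _ _ => rfl) (fun _ => hy) (fun _ => e)
      refine ⟨I, β, ⟨e, hx ▸ he, mem_denot_vt.2 (hβ ()).symm⟩, ?_, hr'⟩
      simp only [satC]
      rw [hβ (), hd T (by simp [tvars])]
      exact heT
    · rintro ⟨I, α, ⟨e, he, rfl⟩, hT, hr⟩
      exact ⟨I, α, ⟨_, he, hT⟩, hr⟩
  | @dexi rest x f y T h1 _ hy h2 =>
    subst h1 h2
    simp only [SysConsistent, satS_cons]
    constructor
    · rintro ⟨I, α, ⟨e, he, heT⟩, hr⟩
      obtain ⟨β, hβ, hx, hr', hd⟩ := exists_fresh α hr (fun _ : Unit => y)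
        (fun _ _ _ => rfl) (fun _ => hy) (fun _ => e)
      refine ⟨I, β, ⟨e, hx ▸ he, mem_denot_vt.2 (hβ ()).symm⟩, ?_, hr'⟩
      simp only [satC]
      rw [hβ (), hd T (by simp [tvars])]
      exact heT
    · rintro ⟨I, α, ⟨e, he, rfl⟩, hT, hr⟩
      exact ⟨I, α, ⟨_, he, hT⟩, hr⟩
  | @dforall rest x f y p h1 hp hy h2 =>
    subst h1 h2
    simp only [SysConsistent, satS_cons]
    -- An atom or a constant denotes a singleton, whose element is the value for `y`.
    have hsing : ∀ (I : Interp) (α : Assign I), ∃ e, pdenot I α p = {e} := by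
      rintro I α
      rcases hp with ⟨a, rfl⟩ | ⟨c, rfl⟩
      · exact ⟨_, rfl⟩
      · exact ⟨_, rfl⟩
    constructor
    · rintro ⟨I, α, hx0, hr⟩
      obtain ⟨e, he⟩ := hsing I α
      obtain ⟨β, hβ, hx, hr', hd⟩ := exists_fresh α hr (fun _ : Unit => y)
        (fun _ _ _ => rfl) (fun _ => hy) (fun _ => e)
      have hp' : pdenot I β p = {e} := (hd (.patom p) (by simp [tvars])).trans he
      refine ⟨I, β, fun e' he' => ?_, ?_, hr'⟩
      · rw [hx] at he'
        have := hx0 e' he'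
        rw [he] at this
        exact this.trans (hβ ()).symm
      · change β.vval y ∈ pdenot I β p
        rw [hp']
        exact hβ ()
    · rintro ⟨I, α, hx, hy', hr⟩
      refine ⟨I, α, fun e' he' => ?_, hr⟩
      have : e' = α.vval y := hx e' he'
      rw [this]
      exact hy'
  | @dset rest x f n ts xs h1 _ hinj hfr h2 =>
    subst h1 h2
    simp only [SysConsistent, satS_cons, satS_add, satS_finCons]
    constructor
    · rintro ⟨I, α, ⟨es, himg, hes⟩, hr⟩
      obtain ⟨β, hβ, hx, hr', hd⟩ := exists_fresh α hr xs hinj hfr es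
      refine ⟨I, β, ⟨es, hx ▸ himg, fun i => (hβ i).symm⟩, fun i => ?_, hr'⟩
      simp only [satC]
      rw [hβ i, hd (ts i) (Set.subset_iUnion (fun i => tvars (ts i)) i)]
      exact hes i
    · rintro ⟨I, α, ⟨es, himg, hes⟩, hT, hr⟩
      refine ⟨I, α, ⟨es, himg, fun i => ?_⟩, hr⟩
      rw [mem_denot_vt.1 (hes i)]
      exact hT i
  | @dsetEq rest x f n ts xs h1 _ hinj hfr h2 =>
    subst h1 h2
    simp only [SysConsistent, satS_cons, satS_add, satS_finCons]
    constructor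
    · rintro ⟨I, α, ⟨es, hcard, himg, hes⟩, hr⟩
      obtain ⟨β, hβ, hx, hr', hd⟩ := exists_fresh α hr xs hinj hfr es
      rw [← hx] at hcard himg
      refine ⟨I, β, ⟨es, himg, fun i => (hβ i).symm⟩,
        ⟨es, hcard, himg, fun i => (hβ i).symm⟩, fun i => ?_, hr'⟩
      simp only [satC]
      rw [hβ i, hd (ts i) (Set.subset_iUnion (fun i => tvars (ts i)) i)]
      exact hes i
    · rintro ⟨I, α, -, ⟨es, hcard, himg, hes⟩, hT, hr⟩
      refine ⟨I, α, ⟨es, hcard, himg, fun i => ?_⟩, hr⟩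
      rw [mem_denot_vt.1 (hes i)]
      exact hT i
  | dconj h1 h2 =>
    subst h1 h2
    simp only [SysConsistent, satS_cons, satC, denot, Set.mem_inter_iff, and_assoc]

end FeatSetLogic
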